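/- arXiv:2411.11208 — 3 statements merged into one kernel-verified Lean document; each statement's English description precedes it below -/
import Mathlib

section
/- Let w be a permutation of {1,…,n} with permutation matrix P (P_{ij} = 1 if i = w(j), else 0), let D be a diagonal n×n matrix, and let b ∈ B₋, c ∈ B₊. Set X = bPc⁻¹ and Y = cP⁻¹Db⁻¹. Then (X,Y) lies in the lower-upper scheme E (i.e., XY is lower triangular and YX is upper triangular); moreover (XY)_{ii} = D_{ii} and (YX)_{ii} = D_{w(i),w(i)} for all i, so the diagonal of XY is obtained from the diagonal of YX by applying the permutation w. -/
/-- `M` is lower triangular. -/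
def LowerTri {n : ℕ} {K : Type*} [CommRing K] (M : Matrix (Fin n) (Fin n) K) : Prop :=
  ∀ i j : Fin n, i < j → M i j = 0

/-- `M` is upper triangular. -/
def UpperTri {n : ℕ} {K : Type*} [CommRing K] (M : Matrix (Fin n) (Fin n) K) : Prop :=
  ∀ i j : Fin n, j < i → M i j = 0

/-- The permutation matrix of `w`: `P i j = 1` iff `i = w j`. -/
def permMat {n : ℕ} (K : Type*) [CommRing K] (w : Equiv.Perm (Fin n)) :
    Matrix (Fin n) (Fin n) K :=
  fun i j => if i = w j then 1 else 0

theorem aux_diag_mul {n : ℕ} {K α : Type*} [Field K] [LinearOrder α] (f : Fin n → α)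
    (hf : Function.Injective f) (M N : Matrix (Fin n) (Fin n) K)
    (hM : M.BlockTriangular f) (hN : N.BlockTriangular f) (i : Fin n) :
    (M * N) i i = M i i * N i i := by
  rw [Matrix.mul_apply]
  refine Finset.sum_eq_single i ?_ (by simp)
  intro j _ hj
  rcases lt_or_gt_of_ne (hf.ne hj) with h | h
  · rw [hM h, zero_mul]
  · rw [hN h, mul_zero]

theorem aux_conj {n : ℕ} {K α : Type*} [Field K] [LinearOrder α] (f : Fin n → α)
    (hf : Function.Injective f) (M E : Matrix (Fin n) (Fin n) K)
    (hM : M.BlockTriangular f) (hE : ∀ i j : Fin n, i ≠ j → E i j = 0) (hu : IsUnit M) :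
    (M * E * M⁻¹).BlockTriangular f ∧ ∀ i, (M * E * M⁻¹) i i = E i i := by
  have hd : IsUnit M.det := (Matrix.isUnit_iff_isUnit_det M).1 hu
  have hEt : E.BlockTriangular f := by
    intro i j h
    apply hE
    rintro rfl
    exact lt_irrefl _ h
  haveI : Invertible M := hu.invertible
  have hI : (M⁻¹).BlockTriangular f := Matrix.blockTriangular_inv_of_blockTriangular hM
  refine ⟨(hM.mul hEt).mul hI, fun i => ?_⟩
  have h1 : M i i * (M⁻¹) i i = 1 := by
    rw [← aux_diag_mul f hf M _ hM hI, Matrix.mul_nonsing_inv _ hd, Matrix.one_apply_eq]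
  rw [aux_diag_mul f hf _ _ (hM.mul hEt) hI, aux_diag_mul f hf _ _ hM hEt]
  linear_combination E i i * h1

theorem aux_left {n : ℕ} {K : Type*} [Field K] (w : Equiv.Perm (Fin n))
    (A : Matrix (Fin n) (Fin n) K) (i j : Fin n) : (permMat K w * A) i j = A (w⁻¹ i) j := by
  rw [Matrix.mul_apply, Finset.sum_eq_single (w⁻¹ i)]
  · simp [permMat]
  · intro k _ hk
    have : i ≠ w k := by rintro rfl; simp at hk
    simp [permMat, this]
  · simp

theorem aux_right {n : ℕ} {K : Type*} [Field K] (w : Equiv.Perm (Fin n))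
    (A : Matrix (Fin n) (Fin n) K) (i j : Fin n) : (A * permMat K w) i j = A i (w j) := by
  rw [Matrix.mul_apply, Finset.sum_eq_single (w j)]
  · simp [permMat]
  · intro k _ hk
    simp [permMat, hk]
  · simp

theorem statement11 {n : ℕ} (hn : 1 ≤ n) {K : Type*} [Field K]
    (w : Equiv.Perm (Fin n)) (D b c : Matrix (Fin n) (Fin n) K)
    (hD : ∀ i j : Fin n, i ≠ j → D i j = 0)
    (hbL : LowerTri b) (hb : IsUnit b) (hcU : UpperTri c) (hc : IsUnit c)
    (X Y : Matrix (Fin n) (Fin n) K)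
    (hX : X = b * permMat K w * c⁻¹)
    -- `permMat K w⁻¹` is the inverse `P⁻¹` of the permutation matrix `P` of `w`
    (hY : Y = c * permMat K w⁻¹ * D * b⁻¹) :
    LowerTri (X * Y) ∧ UpperTri (Y * X) ∧
    (∀ i : Fin n, (X * Y) i i = D i i) ∧
    (∀ i : Fin n, (Y * X) i i = D (w i) (w i)) ∧
    (∀ i : Fin n, (Y * X) i i = (X * Y) (w i) (w i)) := by
  have hbd : IsUnit b.det := (Matrix.isUnit_iff_isUnit_det b).1 hb
  have hcd : IsUnit c.det := (Matrix.isUnit_iff_isUnit_det c).1 hc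
  have hPP : permMat K w * permMat K w⁻¹ = 1 := by
    ext i j
    rw [aux_left]
    simp [permMat, Matrix.one_apply]
  have hXY : X * Y = b * D * b⁻¹ := by
    calc X * Y = b * permMat K w * (c⁻¹ * c) * permMat K w⁻¹ * D * b⁻¹ := by
          rw [hX, hY]; simp only [Matrix.mul_assoc]
      _ = b * (permMat K w * permMat K w⁻¹) * D * b⁻¹ := by
          rw [Matrix.nonsing_inv_mul _ hcd, Matrix.mul_one]; simp only [Matrix.mul_assoc]
      _ = _ := by rw [hPP, Matrix.mul_one]
  have hYX : Y * X = c * (permMat K w⁻¹ * D * permMat K w) * c⁻¹ := by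
    calc Y * X = c * permMat K w⁻¹ * D * (b⁻¹ * b) * permMat K w * c⁻¹ := by
          rw [hX, hY]; simp only [Matrix.mul_assoc]
      _ = _ := by
          rw [Matrix.nonsing_inv_mul _ hbd, Matrix.mul_one]; simp only [Matrix.mul_assoc]
  have hE : ∀ i j, (permMat K w⁻¹ * D * permMat K w) i j = D (w i) (w j) := by
    intro i j
    rw [aux_right, aux_left, inv_inv]
  obtain ⟨h1, h2⟩ := aux_conj (OrderDual.toDual : Fin n → (Fin n)ᵒᵈ)
    OrderDual.toDual.injective b D (fun i j h => hbL i j h) hD hb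
  obtain ⟨h3, h4⟩ := aux_conj (id : Fin n → Fin n) Function.injective_id c
    (permMat K w⁻¹ * D * permMat K w) (fun i j h => hcU i j h)
    (fun i j h => by rw [hE]; exact hD _ _ (w.injective.ne h)) hc
  rw [← hXY] at h1 h2
  rw [← hYX] at h3 h4
  refine ⟨fun i j h => h1 h, fun i j h => h3 h, h2, fun i => ?_, fun i => ?_⟩
  · rw [h4, hE]
  · rw [h4, hE, h2]
end

section
/- Fix n ≥ 1 and let Q = (q₁,…,q_m) and Q′ = (q′₁,…,q′_{m′}) be two words with entries in {1,…,n−1} whose products of adjacent transpositions are equal: s_{q₁}⋯s_{q_m} = s_{q′₁}⋯s_{q′_{m′}} = v in the symmetric group S_n. Then for every w ∈ S_n, the rational function Σ over subsets I ⊆ {1,…,m} with Π_{i∈I} s_{q_i} = w (product taken in increasing order of i) of Π_{i∈I} β_i/(1+β_i) · Π_{i∉I} 1/(1+β_i), computed from Q, equals the corresponding sum computed from Q′, as elements of the field ℚ(x₁,…,xₙ). (Both equal the restriction of the Segre–Schwartz–MacPherson class of the opposite Bruhat cell of w at the fixed point v.) -/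
open scoped Classical

noncomputable section

namespace AJSBilleySSM

/-- The adjacent transposition `s_k` exchanging `k` and `k+1` (0-indexed). -/
def adjSwap {n : ℕ} (k : Fin n) (h : (k : ℕ) + 1 < n) : Equiv.Perm (Fin n) :=
  Equiv.swap k ⟨(k : ℕ) + 1, h⟩

variable {n m : ℕ}

/-- The letters of the word `q`, as adjacent transpositions. -/
def wordPerm (q : Fin m → Fin n) (hq : ∀ i, (q i : ℕ) + 1 < n) (i : Fin m) :
    Equiv.Perm (Fin n) :=
  adjSwap (q i) (hq i)

/-- `σ_k`, the product of the first `k` letters of the word `q` (so `σ_0 = 1`). -/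
def partialProd (q : Fin m → Fin n) (hq : ∀ i, (q i : ℕ) + 1 < n) (k : ℕ) :
    Equiv.Perm (Fin n) :=
  ((List.ofFn (wordPerm q hq)).take k).prod

/-- The product of the whole word `q`. -/
def wordProd (q : Fin m → Fin n) (hq : ∀ i, (q i : ℕ) + 1 < n) : Equiv.Perm (Fin n) :=
  (List.ofFn (wordPerm q hq)).prod

/-- The root `β_i = x_{σ_{i-1}(q_i)} - x_{σ_{i-1}(q_i + 1)}` attached to the `i`-th letter
of the word `q` (everything 0-indexed, so `σ_{i-1}` is the product of the letters before
the `i`-th one). -/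
def beta (R : Type*) [CommRing R] (q : Fin m → Fin n) (hq : ∀ i, (q i : ℕ) + 1 < n)
    (i : Fin m) : MvPolynomial (Fin n) R :=
  MvPolynomial.X (partialProd q hq i (q i)) -
    MvPolynomial.X (partialProd q hq i ⟨(q i : ℕ) + 1, hq i⟩)

/-- The product `Π_{i ∈ I} s_{q_i}`, taken in increasing order of `i`. -/
def subwordProd (q : Fin m → Fin n) (hq : ∀ i, (q i : ℕ) + 1 < n) (I : Finset (Fin m)) :
    Equiv.Perm (Fin n) :=
  (((List.finRange m).filter (fun i => decide (i ∈ I))).map (wordPerm q hq)).prod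

/-- The image of `β_i` in the field of rational functions `ℚ(x₁,…,xₙ)`. -/
def betaF (q : Fin m → Fin n) (hq : ∀ i, (q i : ℕ) + 1 < n) (i : Fin m) :
    FractionRing (MvPolynomial (Fin n) ℚ) :=
  algebraMap (MvPolynomial (Fin n) ℚ) (FractionRing (MvPolynomial (Fin n) ℚ)) (beta ℚ q hq i)

/-- The AJS/Billey-type sum computing `ssm(X_w^∘)|_v` from a word `q` for `v`:
`Σ_{I : Π_{i∈I} s_{q_i} = w} Π_{i∈I} β_i/(1+β_i) · Π_{i∉I} 1/(1+β_i)`. -/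
def ssmSum (q : Fin m → Fin n) (hq : ∀ i, (q i : ℕ) + 1 < n) (w : Equiv.Perm (Fin n)) :
    FractionRing (MvPolynomial (Fin n) ℚ) :=
  ∑ I ∈ Finset.univ.filter (fun I : Finset (Fin m) => subwordProd q hq I = w),
    (∏ i ∈ I, betaF q hq i / (1 + betaF q hq i)) * ∏ i ∈ Iᶜ, (1 + betaF q hq i)⁻¹

/-- Descending product `g (k+d-1) * ... * g k`. -/
def chain {M : Type*} [Monoid M] (g : ℕ → M) (k : ℕ) : ℕ → M
  | 0 => 1
  | d + 1 => g (k + d) * chain g k d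

lemma chain_low {M : Type*} [Monoid M] (g : ℕ → M) (k : ℕ) (d : ℕ) :
    chain g k (d + 1) = chain g (k + 1) d * g k := by
  induction d with
  | zero => simp [chain]
  | succ d ih =>
    rw [chain, ih, chain, mul_assoc, show k + (d + 1) = k + 1 + d by ring]

lemma chain_comm {M : Type*} [Monoid M] (g : ℕ → M) (k d : ℕ) (a : M)
    (h : ∀ i, k ≤ i → i < k + d → g i * a = a * g i) :
    chain g k d * a = a * chain g k d := by
  induction d with
  | zero => simp [chain]
  | succ d ih =>
    rw [chain, mul_assoc, ih (fun i h1 h2 => h i h1 (by omega)), ← mul_assoc,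
      h (k + d) (by omega) (by omega), mul_assoc]

/-- The Coxeter relations for letters below `N`. -/
structure CoxRel {M : Type*} [Monoid M] (g : ℕ → M) (N : ℕ) : Prop where
  sq : ∀ i, i < N → g i * g i = 1
  comm : ∀ i j, i + 1 < j → j < N → g i * g j = g j * g i
  braid : ∀ i, i + 1 < N → g i * g (i + 1) * g i = g (i + 1) * g i * g (i + 1)

lemma chain_mid {M : Type*} [Monoid M] (g : ℕ → M) (N : ℕ) (H : CoxRel g N) (k d j : ℕ)
    (hN : k + d ≤ N) (hj : k ≤ j) (hjd : j + 1 < k + d) :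
    chain g k d * g (j + 1) = g j * chain g k d := by
  induction d with
  | zero => omega
  | succ d ih =>
    by_cases hlt : j + 1 < k + d
    · rw [chain, mul_assoc, ih (by omega) hlt, ← mul_assoc, ← mul_assoc,
        H.comm j (k + d) (by omega) (by omega)]
    · obtain ⟨e, rfl⟩ : ∃ e, d = e + 1 := ⟨d - 1, by omega⟩
      obtain rfl : j = k + e := by omega
      rw [chain, chain]
      have hc : chain g k e * g (k + e + 1) = g (k + e + 1) * chain g k e :=
        chain_comm g k e _ (fun i h1 h2 => H.comm i _ (by omega) (by omega))
      have hb := H.braid (k + e) (by omega)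
      rw [show k + (e + 1) = k + e + 1 by ring, mul_assoc, mul_assoc, hc]
      simp only [← mul_assoc]
      rw [← hb]

lemma normal_form {M : Type*} [Monoid M] (g : ℕ → M) (N : ℕ) (H : CoxRel g N) (L : List ℕ)
    (hL : ∀ x ∈ L, x < N) :
    ∃ L' : List ℕ, (∀ x ∈ L', x + 1 < N) ∧ ∃ k d, k + d = N ∧
      (L.map g).prod = (L'.map g).prod * chain g k d := by
  induction L using List.reverseRecOn with
  | nil => exact ⟨[], by simp, N, 0, rfl, by simp [chain]⟩
  | append_singleton L j ih =>
    obtain ⟨L', hL', k, d, hkd, e⟩ := ih (fun x hx => hL x (by simp [hx]))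
    have hj : j < N := hL j (by simp)
    have e2 : ((L ++ [j]).map g).prod = (L'.map g).prod * (chain g k d * g j) := by
      simp [e, mul_assoc]
    rw [e2]
    rcases lt_trichotomy j k with h | h | h
    · by_cases h1 : j + 1 = k
      · subst h1
        exact ⟨L', hL', j, d + 1, by omega, by rw [chain_low]⟩
      · refine ⟨L' ++ [j], ?_, k, d, hkd, ?_⟩
        · intro x hx
          rcases List.mem_append.1 hx with hx | hx
          · exact hL' x hx
          · simp at hx; omega
        · rw [chain_comm g k d (g j) (fun i h2 h3 => (H.comm j i (by omega) (by omega)).symm)]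
          simp [mul_assoc]
    · subst h
      obtain ⟨d, rfl⟩ : ∃ e, d = e + 1 := ⟨d - 1, by omega⟩
      refine ⟨L', hL', j + 1, d, by omega, ?_⟩
      rw [chain_low, mul_assoc, H.sq j hj, mul_one]
    · obtain ⟨j, rfl⟩ : ∃ e, j = e + 1 := ⟨j - 1, by omega⟩
      refine ⟨L' ++ [j], ?_, k, d, hkd, ?_⟩
      · intro x hx
        rcases List.mem_append.1 hx with hx | hx
        · exact hL' x hx
        · simp at hx; omega
      · rw [chain_mid g N H k d j hkd.le (by omega) (by omega)]
        simp [mul_assoc]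

/-- adjacent swap on naturals -/
def ns (i : ℕ) : Equiv.Perm ℕ := Equiv.swap i (i + 1)

lemma ns_rel (N : ℕ) : CoxRel ns N where
  sq i _ := by simp [ns]
  comm i j h _ := by
    ext x
    simp only [ns, Equiv.Perm.mul_apply, Equiv.swap_apply_def]
    split_ifs <;> omega
  braid i _ := by
    ext x
    simp only [ns, Equiv.Perm.mul_apply, Equiv.swap_apply_def]
    split_ifs <;> omega

lemma chain_ns (k d : ℕ) : chain ns k d k = k + d := by
  induction d with
  | zero => simp [chain]
  | succ d ih => simp [chain, ih, ns, add_assoc]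

lemma ns_fix (N : ℕ) (L : List ℕ) (h : ∀ x ∈ L, x + 1 < N) : (L.map ns).prod N = N := by
  induction L with
  | nil => simp
  | cons a L ih =>
    have := h a (by simp)
    simp only [List.map_cons, List.prod_cons, Equiv.Perm.mul_apply]
    rw [ih (fun x hx => h x (by simp [hx])), ns, Equiv.swap_apply_of_ne_of_ne] <;> omega

lemma CoxRel.prod {M P : Type*} [Monoid M] [Monoid P] {g : ℕ → M} {p : ℕ → P} {N : ℕ}
    (H : CoxRel g N) (K : CoxRel p N) : CoxRel (fun i => (g i, p i)) N where
  sq i h := Prod.ext (H.sq i h) (K.sq i h)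
  comm i j h h' := Prod.ext (H.comm i j h h') (K.comm i j h h')
  braid i h := Prod.ext (H.braid i h) (K.braid i h)

lemma map_pair_prod {M P : Type*} [Monoid M] [Monoid P] (g : ℕ → M) (p : ℕ → P) (L : List ℕ) :
    (L.map (fun i => (g i, p i))).prod = ((L.map g).prod, (L.map p).prod) := by
  induction L with
  | nil => rfl
  | cons a L ih => simp [ih]

lemma chain_pair {M P : Type*} [Monoid M] [Monoid P] (g : ℕ → M) (p : ℕ → P) (k d : ℕ) :
    chain (fun i => (g i, p i)) k d = (chain g k d, chain p k d) := by
  induction d with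
  | zero => rfl
  | succ d ih => simp [chain, ih]

lemma presentation {M : Type*} [Monoid M] (g : ℕ → M) (N : ℕ) (H : CoxRel g N)
    (L₁ L₂ : List ℕ) (h₁ : ∀ x ∈ L₁, x < N) (h₂ : ∀ x ∈ L₂, x < N)
    (h : (L₁.map ns).prod = (L₂.map ns).prod) : (L₁.map g).prod = (L₂.map g).prod := by
  induction N generalizing L₁ L₂ with
  | zero =>
    have z₁ : L₁ = [] := List.eq_nil_iff_forall_not_mem.2 (fun x hx => by simpa using h₁ x hx)
    have z₂ : L₂ = [] := List.eq_nil_iff_forall_not_mem.2 (fun x hx => by simpa using h₂ x hx)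
    rw [z₁, z₂]
  | succ N ih =>
    have HH := H.prod (ns_rel (N + 1))
    obtain ⟨A, hA, k, d, hk, eA⟩ := normal_form _ _ HH L₁ h₁
    obtain ⟨B, hB, l, e, hl, eB⟩ := normal_form _ _ HH L₂ h₂
    simp only [map_pair_prod, chain_pair, Prod.mk_mul_mk, Prod.mk.injEq] at eA eB
    have hv1 : (L₁.map ns).prod k = N + 1 := by
      rw [eA.2, Equiv.Perm.mul_apply, chain_ns, hk, ns_fix _ _ hA]
    have hv2 : (L₂.map ns).prod l = N + 1 := by
      rw [eB.2, Equiv.Perm.mul_apply, chain_ns, hl, ns_fix _ _ hB]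
    obtain rfl : k = l := by
      apply (L₁.map ns).prod.injective
      rw [hv1, h, hv2]
    obtain rfl : d = e := by omega
    rw [eA.1, eB.1]
    congr 1
    apply ih ⟨fun i hi => H.sq i (by omega), fun i j hi hj => H.comm i j hi (by omega),
      fun i hi => H.braid i (by omega)⟩ _ _ (fun x hx => by have := hA x hx; omega)
      (fun x hx => by have := hB x hx; omega)
    rw [eA.2, eB.2] at h
    exact mul_right_cancel h

/-- field of rational functions -/
abbrev RF (n : ℕ) := FractionRing (MvPolynomial (Fin n) ℚ)

/-- variable in the field -/
def xv (n : ℕ) (a : Fin n) : RF n := algebraMap (MvPolynomial (Fin n) ℚ) (RF n) (MvPolynomial.X a)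

lemma one_add_ne {n : ℕ} (a b : Fin n) : (1 + (xv n a - xv n b) : RF n) ≠ 0 := by
  have : (1 + (xv n a - xv n b) : RF n) = algebraMap (MvPolynomial (Fin n) ℚ) (RF n)
      (1 + (MvPolynomial.X a - MvPolynomial.X b)) := by simp [xv]
  rw [this]
  intro h
  have h0 := (IsFractionRing.injective (MvPolynomial (Fin n) ℚ) (RF n)) (h.trans (map_zero _).symm)
  have := congrArg (MvPolynomial.eval (fun _ => (0 : ℚ))) h0
  simp at this

/-- The abstract operator for the swap of `a` and `b`. -/
def opT {n : ℕ} (a b : Fin n) :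
    Function.End (Equiv.Perm (Fin n) → Equiv.Perm (Fin n) → RF n) :=
  fun H σ w => (1 + (xv n (σ a) - xv n (σ b)))⁻¹ *
    (H (σ * Equiv.swap a b) w +
      (xv n (σ a) - xv n (σ b)) * H (σ * Equiv.swap a b) (Equiv.swap a b * w))

lemma opT_sq {n : ℕ} (a b : Fin n) : opT a b * opT a b = 1 := by
  funext H σ w
  show opT a b (opT a b H) σ w = H σ w
  have h1 := one_add_ne (σ a) (σ b)
  have h2 := one_add_ne (σ b) (σ a)
  simp only [opT, Equiv.Perm.mul_apply, Equiv.swap_apply_left, Equiv.swap_apply_right, mul_assoc,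
    Equiv.swap_mul_self, mul_one, Equiv.swap_mul_self_mul]
  field_simp
  ring

lemma opT_comm {n : ℕ} (a b c d : Fin n) (h1 : a ≠ c) (h2 : a ≠ d) (h3 : b ≠ c) (h4 : b ≠ d) :
    opT a b * opT c d = opT c d * opT a b := by
  funext H σ w
  show opT a b (opT c d H) σ w = opT c d (opT a b H) σ w
  have hc : Equiv.swap a b * Equiv.swap c d = Equiv.swap c d * Equiv.swap a b := by
    ext x
    simp only [Equiv.Perm.mul_apply, Equiv.swap_apply_def]
    grind
  have hc' : ∀ u, Equiv.swap c d * (Equiv.swap a b * u) = Equiv.swap a b * (Equiv.swap c d * u) := by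
    intro u; rw [← mul_assoc, ← hc, mul_assoc]
  simp only [opT, Equiv.Perm.mul_apply, Equiv.swap_apply_of_ne_of_ne h1 h2,
    Equiv.swap_apply_of_ne_of_ne h3 h4, Equiv.swap_apply_of_ne_of_ne h1.symm h3.symm,
    Equiv.swap_apply_of_ne_of_ne h2.symm h4.symm, mul_assoc, hc, hc']
  ring

lemma opT_braid {n : ℕ} (a b c : Fin n) (h1 : a ≠ b) (h2 : b ≠ c) (h3 : a ≠ c) :
    opT a b * opT b c * opT a b = opT b c * opT a b * opT b c := by
  funext H σ w
  show opT a b (opT b c (opT a b H)) σ w = opT b c (opT a b (opT b c H)) σ w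
  have hc : Equiv.swap a b * (Equiv.swap b c * Equiv.swap a b) =
      Equiv.swap b c * (Equiv.swap a b * Equiv.swap b c) := by
    ext x
    simp only [Equiv.Perm.mul_apply, Equiv.swap_apply_def]
    grind
  have hc' : ∀ u, Equiv.swap a b * (Equiv.swap b c * (Equiv.swap a b * u)) =
      Equiv.swap b c * (Equiv.swap a b * (Equiv.swap b c * u)) := by
    intro u
    have := congrArg (· * u) hc
    simpa [mul_assoc] using this
  have e1 := one_add_ne (σ a) (σ b)
  have e2 := one_add_ne (σ b) (σ c)
  have e3 := one_add_ne (σ a) (σ c)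
  simp only [opT, Equiv.Perm.mul_apply, Equiv.swap_apply_left, Equiv.swap_apply_right,
    Equiv.swap_apply_of_ne_of_ne h3.symm h2.symm,
    Equiv.swap_apply_of_ne_of_ne h1 h3, mul_assoc, hc, hc', Equiv.swap_mul_self_mul]
  generalize xv n (σ a) = x at *
  generalize xv n (σ b) = y at *
  generalize xv n (σ c) = z at *
  field_simp
  ring

/-- operators indexed by naturals -/
def opN (n : ℕ) (i : ℕ) : Function.End (Equiv.Perm (Fin n) → Equiv.Perm (Fin n) → RF n) :=
  if h : i + 1 < n then opT ⟨i, by omega⟩ ⟨i + 1, h⟩ else 1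

lemma opN_rel (n : ℕ) : CoxRel (opN n) (n - 1) where
  sq i h := by
    rw [opN, dif_pos (by omega)]; exact opT_sq _ _
  comm i j h h' := by
    rw [opN, opN, dif_pos (by omega), dif_pos (by omega)]
    apply opT_comm <;> simp [Fin.ext_iff] <;> omega
  braid i h := by
    rw [opN, opN, dif_pos (by omega), dif_pos (by omega)]
    apply opT_braid <;> simp only [ne_eq, Fin.ext_iff] <;> omega

/-- general sum -/
def gsum {F : Type*} [Field F] {G : Type*} [Group G] {m : ℕ} (b : Fin m → F) (s : Fin m → G)
    (w : G) : F :=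
  ∑ I : Finset (Fin m), if (List.ofFn (fun i => if i ∈ I then s i else 1)).prod = w then
    ∏ i, (if i ∈ I then b i / (1 + b i) else (1 + b i)⁻¹) else 0

lemma sum_finset_succ {F : Type*} [AddCommMonoid F] {m : ℕ} (f : Finset (Fin (m + 1)) → F) :
    ∑ I, f I = ∑ I : Finset (Fin m), f (I.map (Fin.succEmb m)) +
      ∑ I : Finset (Fin m), f (insert 0 (I.map (Fin.succEmb m))) := by
  have hu : (Finset.univ : Finset (Finset (Fin (m + 1)))) =
      (insert 0 ((Finset.univ : Finset (Fin m)).map (Fin.succEmb m))).powerset := by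
    have : insert 0 ((Finset.univ : Finset (Fin m)).map (Fin.succEmb m)) = Finset.univ := by
      ext x
      refine Fin.cases ?_ ?_ x <;> simp
    rw [this, Finset.powerset_univ]
  have key : ∀ f : Finset (Fin (m + 1)) → F,
      ∑ I ∈ ((Finset.univ : Finset (Fin m)).map (Fin.succEmb m)).powerset, f I =
      ∑ I : Finset (Fin m), f (I.map (Fin.succEmb m)) := by
    intro f
    symm
    apply Finset.sum_bij (fun I _ => I.map (Fin.succEmb m))
    · intro I _
      simpa using Finset.map_subset_map.2 (Finset.subset_univ I)
    · intro I _ J _ h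
      exact Finset.map_injective _ h
    · intro J hJ
      obtain ⟨I, _, rfl⟩ := Finset.subset_map_iff.1 (Finset.mem_powerset.1 hJ)
      exact ⟨I, Finset.mem_univ _, rfl⟩
    · intros; rfl
  rw [hu, Finset.sum_powerset_insert (by simp), key, key (fun I => f (insert 0 I))]

lemma gsum_succ {F : Type*} [Field F] {G : Type*} [Group G] {m : ℕ} (b : Fin (m + 1) → F)
    (s : Fin (m + 1) → G) (w : G) :
    gsum b s w = (1 + b 0)⁻¹ * (gsum (fun i => b i.succ) (fun i => s i.succ) w +
      b 0 * gsum (fun i => b i.succ) (fun i => s i.succ) ((s 0)⁻¹ * w)) := by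
  rw [gsum, sum_finset_succ, mul_add, gsum, gsum, Finset.mul_sum, Finset.mul_sum, Finset.mul_sum]
  congr 1
  · refine Finset.sum_congr rfl fun I _ => ?_
    simp [List.ofFn_succ, Fin.prod_univ_succ]
  · refine Finset.sum_congr rfl fun I _ => ?_
    simp [List.ofFn_succ, Fin.prod_univ_succ, eq_inv_mul_iff_mul_eq]
    split_ifs
    · ring
    · rfl

lemma gsum_zero {F : Type*} [Field F] {G : Type*} [Group G] (b : Fin 0 → F)
    (s : Fin 0 → G) (w : G) : gsum b s w = if w = 1 then 1 else 0 := by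
  simp [gsum, eq_comm]

lemma ssmSum_eq_gsum {n m : ℕ} (q : Fin m → Fin n) (hq : ∀ i, (q i : ℕ) + 1 < n)
    (w : Equiv.Perm (Fin n)) : ssmSum q hq w = gsum (betaF q hq) (wordPerm q hq) w := by
  rw [ssmSum, gsum, Finset.sum_filter]
  refine Finset.sum_congr rfl fun I _ => ?_
  have h1 : subwordProd q hq I =
      (List.ofFn (fun i => if i ∈ I then wordPerm q hq i else 1)).prod := by
    rw [subwordProd, List.ofFn_eq_map]
    induction List.finRange m with
    | nil => simp
    | cons a L ih => by_cases h : a ∈ I <;> simp [h, ih]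
  have h2 : (∏ i, (if i ∈ I then betaF q hq i / (1 + betaF q hq i)
      else (1 + betaF q hq i)⁻¹)) =
      (∏ i ∈ I, betaF q hq i / (1 + betaF q hq i)) * ∏ i ∈ Iᶜ, (1 + betaF q hq i)⁻¹ := by
    rw [Finset.prod_ite]
    congr 2 <;> ext <;> simp
  rw [h1, h2]
  congr

/-- twisted roots -/
def betaS {n m : ℕ} (σ : Equiv.Perm (Fin n)) (q : Fin m → Fin n)
    (hq : ∀ i, (q i : ℕ) + 1 < n) (i : Fin m) : RF n :=
  xv n ((σ * partialProd q hq i) (q i)) - xv n ((σ * partialProd q hq i) ⟨(q i : ℕ) + 1, hq i⟩)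

lemma gsum_eq_op {n m : ℕ} (q : Fin m → Fin n) (hq : ∀ i, (q i : ℕ) + 1 < n)
    (σ w : Equiv.Perm (Fin n)) :
    gsum (betaS σ q hq) (wordPerm q hq) w =
      (((List.ofFn (fun i => (q i : ℕ))).map (opN n)).prod : Function.End _)
        (fun _ w => if w = 1 then 1 else 0) σ w := by
  induction m generalizing σ w with
  | zero =>
    rw [gsum_zero, List.ofFn_zero, List.map_nil, List.prod_nil]
    show _ = (if w = 1 then 1 else 0)
    congr
  | succ m ih =>
    have hb : (fun i : Fin m => betaS σ q hq i.succ) =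
        betaS (σ * adjSwap (q 0) (hq 0)) (fun i => q i.succ) (fun i => hq i.succ) := by
      funext i
      simp [betaS, partialProd, List.ofFn_succ, mul_assoc, wordPerm, Function.comp_def]
      rfl
    have hs : (fun i : Fin m => wordPerm q hq i.succ) =
        wordPerm (fun i => q i.succ) (fun i => hq i.succ) := rfl
    rw [gsum_succ, hb, hs, ih, ih, List.ofFn_succ, List.map_cons, List.prod_cons]
    have ho : opN n (q 0 : ℕ) = opT (q 0) ⟨(q 0 : ℕ) + 1, hq 0⟩ := by
      rw [opN, dif_pos (hq 0)]
    have hi : (wordPerm q hq 0)⁻¹ = Equiv.swap (q 0) ⟨(q 0 : ℕ) + 1, hq 0⟩ := by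
      simp [wordPerm, adjSwap]
    have h0 : betaS σ q hq 0 = xv n (σ (q 0)) - xv n (σ ⟨(q 0 : ℕ) + 1, hq 0⟩) := by
      simp [betaS, partialProd]
    rw [ho, hi, h0]
    rfl

lemma via_adj {n : ℕ} (k : Fin n) (h : (k : ℕ) + 1 < n) :
    Equiv.Perm.viaEmbeddingHom (Fin.valEmbedding (n := n)) (adjSwap k h) = ns k := by
  ext x
  rw [Equiv.Perm.viaEmbeddingHom_apply]
  by_cases hx : x < n
  · have := Equiv.Perm.viaEmbedding_apply (adjSwap k h) (Fin.valEmbedding (n := n)) ⟨x, hx⟩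
    simp only [Fin.valEmbedding_apply] at this
    rw [this, adjSwap, ns, Equiv.swap_apply_def, Equiv.swap_apply_def]
    simp only [Fin.ext_iff]
    split_ifs <;> simp_all
  · rw [Equiv.Perm.viaEmbedding_apply_of_notMem, ns, Equiv.swap_apply_of_ne_of_ne]
    · omega
    · omega
    · rintro ⟨y, rfl⟩
      exact hx y.2

lemma wordProd_ns {n m : ℕ} (q : Fin m → Fin n) (hq : ∀ i, (q i : ℕ) + 1 < n) :
    ((List.ofFn (fun i => (q i : ℕ))).map ns).prod =
      Equiv.Perm.viaEmbeddingHom (Fin.valEmbedding (n := n)) (wordProd q hq) := by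
  rw [wordProd, map_list_prod, List.map_ofFn, List.map_ofFn]
  congr 2
  funext i
  exact (via_adj _ _).symm

theorem statement16 {n : ℕ} (hn : 1 ≤ n) {m m' : ℕ}
    (q : Fin m → Fin n) (hq : ∀ i, (q i : ℕ) + 1 < n)
    (q' : Fin m' → Fin n) (hq' : ∀ i, (q' i : ℕ) + 1 < n)
    (v : Equiv.Perm (Fin n))
    (hv : wordProd q hq = v) (hv' : wordProd q' hq' = v)
    (w : Equiv.Perm (Fin n)) :
    ssmSum q hq w = ssmSum q' hq' w := by
  rw [ssmSum_eq_gsum, ssmSum_eq_gsum]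
  have hb : ∀ {k : ℕ} (r : Fin k → Fin n) (hr : ∀ i, (r i : ℕ) + 1 < n),
      betaF r hr = betaS 1 r hr := by
    intro k r hr
    funext i
    simp [betaF, beta, betaS, xv]
  rw [hb, hb, gsum_eq_op, gsum_eq_op]
  rw [presentation (opN n) (n - 1) (opN_rel n) _ (List.ofFn (fun i => (q' i : ℕ)))]
  · intro x hx
    obtain ⟨i, rfl⟩ := (List.mem_ofFn' _ _).1 hx
    have := hq i
    show (q i : ℕ) < n - 1
    omega
  · intro x hx
    obtain ⟨i, rfl⟩ := (List.mem_ofFn' _ _).1 hx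
    have := hq' i
    show (q' i : ℕ) < n - 1
    omega
  · rw [wordProd_ns q hq, wordProd_ns q' hq', hv, hv']

end AJSBilleySSM
end
end

section
/- Fix n ≥ 1, let v ∈ S_n, and let Q = (q₁,…,q_ℓ) and Q′ = (q′₁,…,q′_ℓ) be two reduced words for v (i.e., s_{q₁}⋯s_{q_ℓ} = v = s_{q′₁}⋯s_{q′_ℓ} with ℓ = ℓ(v) the number of inversions of v). Then for every w ∈ S_n, the polynomial Σ over subsets I ⊆ {1,…,ℓ} with Π_{i∈I} s_{q_i} = w (product in increasing order of i) of Π_{i∈I} β_i, computed from Q, equals the corresponding sum computed from Q′, as elements of ℤ[x₁,…,xₙ]. (Both equal the Chern–Schwartz–MacPherson class of the open Kazhdan–Lusztig variety X_w° ∩ X^v_° inside the cell X^v_°.) -/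
open scoped Classical

noncomputable section

namespace AJSBilleySSM

variable {n m : ℕ}

/-- The number of inversions (Coxeter length) of a permutation. -/
def invCount (w : Equiv.Perm (Fin n)) : ℕ :=
  (Finset.univ.filter (fun p : Fin n × Fin n => p.1 < p.2 ∧ w p.2 < w p.1)).card

/-- The CSM-class sum attached to a word `q` and `w`:
`Σ_{I ⊆ {1,…,ℓ} : Π_{i∈I} s_{q_i} = w} Π_{i∈I} β_i ∈ ℤ[x₁,…,xₙ]`. -/
def csmSum (q : Fin m → Fin n) (hq : ∀ i, (q i : ℕ) + 1 < n) (w : Equiv.Perm (Fin n)) :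
    MvPolynomial (Fin n) ℤ :=
  ∑ I ∈ Finset.univ.filter (fun I : Finset (Fin m) => subwordProd q hq I = w),
    ∏ i ∈ I, beta ℤ q hq i

open MonoidAlgebra

lemma adjSwap_lt {a : Fin n} (h : (a:ℕ)+1 < n) {x y : Fin n} (hxy : x < y)
    (hne : ¬ (x = a ∧ y = ⟨(a:ℕ)+1, h⟩)) : adjSwap a h x < adjSwap a h y := by
  unfold adjSwap
  simp only [Equiv.swap_apply_def, Fin.ext_iff, Fin.lt_def] at *
  split_ifs <;> simp_all <;> omega

lemma adjSwap_sq {a : Fin n} (h : (a:ℕ)+1 < n) : adjSwap a h * adjSwap a h = 1 := by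
  simp [adjSwap]

lemma adjSwap_inv_apply {a : Fin n} (h : (a:ℕ)+1 < n) (x) :
    adjSwap a h (adjSwap a h x) = x := by
  simp [adjSwap]

lemma adjSwap_left {a : Fin n} (h : (a:ℕ)+1 < n) : adjSwap a h a = ⟨(a:ℕ)+1, h⟩ := by
  simp [adjSwap]

lemma adjSwap_right {a : Fin n} (h : (a:ℕ)+1 < n) : adjSwap a h ⟨(a:ℕ)+1, h⟩ = a := by
  simp [adjSwap]

lemma invCount_asc (u : Equiv.Perm (Fin n)) {a : Fin n} (h : (a:ℕ)+1 < n)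
    (hu : u a < u ⟨(a:ℕ)+1, h⟩) : invCount (u * adjSwap a h) = invCount u + 1 := by
  unfold invCount
  have hnot : ((a, ⟨(a:ℕ)+1, h⟩) : Fin n × Fin n) ∉
      (Finset.univ.filter (fun p : Fin n × Fin n => p.1 < p.2 ∧ u p.2 < u p.1)).image
        (fun p => (adjSwap a h p.1, adjSwap a h p.2)) := by
    simp only [Finset.mem_image, Finset.mem_filter, Prod.mk.injEq, not_exists, not_and]
    rintro ⟨x, y⟩ ⟨_, hxy, _⟩ h1 h2
    have e1 := congrArg (adjSwap a h) h1
    have e2 := congrArg (adjSwap a h) h2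
    simp only [adjSwap_inv_apply, adjSwap_left, adjSwap_right] at e1 e2
    subst e1 e2
    simp [Fin.lt_def] at hxy
  have hinj : Function.Injective
      (fun p : Fin n × Fin n => (adjSwap a h p.1, adjSwap a h p.2)) := by
    rintro ⟨x, y⟩ ⟨x', y'⟩ e
    simpa using e
  rw [← Finset.card_image_of_injective
      (Finset.univ.filter (fun p : Fin n × Fin n => p.1 < p.2 ∧ u p.2 < u p.1)) hinj, ← Finset.card_insert_of_notMem hnot]
  congr 1
  ext ⟨x, y⟩
  simp only [Finset.mem_filter, Finset.mem_univ, true_and, Finset.mem_insert, Finset.mem_image,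
    Prod.mk.injEq, Prod.exists]
  rw [Equiv.Perm.mul_apply, Equiv.Perm.mul_apply]
  constructor
  · rintro ⟨hxy, hv⟩
    by_cases hc : x = a ∧ y = ⟨(a:ℕ)+1, h⟩
    · exact Or.inl hc
    · exact Or.inr ⟨_, _, ⟨adjSwap_lt h hxy hc, hv⟩, adjSwap_inv_apply h x, adjSwap_inv_apply h y⟩
  · rintro (⟨rfl, rfl⟩ | ⟨x', y', ⟨hxy, hv⟩, rfl, rfl⟩)
    · rw [adjSwap_left, adjSwap_right]
      exact ⟨by simp [Fin.lt_def], hu⟩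
    · rw [adjSwap_inv_apply, adjSwap_inv_apply]
      refine ⟨adjSwap_lt h hxy ?_, hv⟩
      rintro ⟨rfl, rfl⟩
      exact absurd hu (not_lt.2 hv.le)

lemma mul_adjSwap_adjSwap (u : Equiv.Perm (Fin n)) {a : Fin n} (h : (a:ℕ)+1 < n) :
    u * adjSwap a h * adjSwap a h = u := by
  rw [mul_assoc, adjSwap_sq, mul_one]

lemma invCount_desc (u : Equiv.Perm (Fin n)) {a : Fin n} (h : (a:ℕ)+1 < n)
    (hu : u ⟨(a:ℕ)+1, h⟩ < u a) : invCount u = invCount (u * adjSwap a h) + 1 := by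
  have := invCount_asc (u * adjSwap a h) h (by
    simpa only [Equiv.Perm.mul_apply, adjSwap_left, adjSwap_right] using hu)
  rwa [mul_adjSwap_adjSwap] at this

lemma asc_or_desc (u : Equiv.Perm (Fin n)) {a : Fin n} (h : (a:ℕ)+1 < n) :
    u a < u ⟨(a:ℕ)+1, h⟩ ∨ u ⟨(a:ℕ)+1, h⟩ < u a := by
  apply lt_or_gt_of_ne
  intro e
  have := u.injective e
  simp [Fin.ext_iff] at this

lemma invCount_one : invCount (1 : Equiv.Perm (Fin n)) = 0 := by
  unfold invCount
  rw [Finset.card_eq_zero, Finset.filter_eq_empty_iff]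
  rintro ⟨x, y⟩ _ ⟨h1, h2⟩
  exact absurd h1 (not_lt.2 h2.le)

lemma exists_desc (u : Equiv.Perm (Fin n)) (hu : u ≠ 1) :
    ∃ (a : Fin n) (h : (a:ℕ)+1 < n), u ⟨(a:ℕ)+1, h⟩ < u a := by
  by_contra! hc
  apply hu
  have hmono : StrictMono u := by
    rcases n with _ | n
    · intro x; exact x.elim0
    · rw [Fin.strictMono_iff_lt_succ]
      intro i
      have h : ((i.castSucc : Fin (n+1)) : ℕ) + 1 < n + 1 := by simp
      exact (asc_or_desc u h).resolve_right (not_lt.2 (hc _ h))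
  have hr : StrictMono (u⁻¹ : Equiv.Perm (Fin n)) := by
    intro x y hxy
    apply hmono.lt_iff_lt.1
    simpa using hxy
  ext x
  have h1 := hmono.le_apply (x := x)
  have h2 := hr.le_apply (x := u x)
  simp at h2
  rw [le_antisymm h2 h1]; rfl

abbrev AA (n : ℕ) := MonoidAlgebra (MvPolynomial (Fin n) ℤ) (Equiv.Perm (Fin n))

def fac (u : Equiv.Perm (Fin n)) (a : Fin n) (h : (a:ℕ)+1 < n) : AA n :=
  1 + (MvPolynomial.X (u a) - MvPolynomial.X (u ⟨(a:ℕ)+1, h⟩) : MvPolynomial (Fin n) ℤ) •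
    MonoidAlgebra.of (MvPolynomial (Fin n) ℤ) _ (adjSwap a h)

def Reach : ℕ → Equiv.Perm (Fin n) → AA n → Prop
  | 0, v, P => v = 1 ∧ P = 1
  | N+1, v, P => ∃ (u : Equiv.Perm (Fin n)) (P0 : AA n) (a : Fin n) (h : (a:ℕ)+1 < n),
      u a < u ⟨(a:ℕ)+1, h⟩ ∧ v = u * adjSwap a h ∧ Reach N u P0 ∧ P = P0 * fac u a h

lemma reach_exists (N : ℕ) : ∀ v : Equiv.Perm (Fin n), invCount v = N → ∃ P, Reach N v P := by
  induction N with
  | zero =>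
    intro v hv
    refine ⟨1, ?_, rfl⟩
    by_contra hne
    obtain ⟨a, h, hd⟩ := exists_desc v hne
    have := invCount_desc v h hd
    omega
  | succ N ih =>
    intro v hv
    have hne : v ≠ 1 := by rintro rfl; rw [invCount_one] at hv; omega
    obtain ⟨a, h, hd⟩ := exists_desc v hne
    have := invCount_desc v h hd
    obtain ⟨P, hP⟩ := ih (v * adjSwap a h) (by omega)
    refine ⟨_, v * adjSwap a h, P, a, h, ?_, (mul_adjSwap_adjSwap _ _).symm, hP, rfl⟩
    simpa only [Equiv.Perm.mul_apply, adjSwap_left, adjSwap_right] using hd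

lemma reach_inv (N : ℕ) : ∀ (v : Equiv.Perm (Fin n)) P, Reach N v P → invCount v = N := by
  induction N with
  | zero => rintro v P ⟨rfl, _⟩; exact invCount_one
  | succ N ih =>
    rintro v P ⟨u, P0, a, h, ha, rfl, hR, -⟩
    rw [invCount_asc u h ha, ih _ _ hR]

lemma yb {R A : Type*} [CommRing R] [Ring A] [Algebra R A] (S T : A) (a b c : R)
    (hS : S * S = 1) (hT : T * T = 1) (hST : S * T * S = T * S * T) (hc : c = a + b) :
    (1 + a • S) * (1 + c • T) * (1 + b • S) = (1 + b • T) * (1 + c • S) * (1 + a • T) := by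
  subst hc
  simp only [mul_add, add_mul, one_mul, mul_one, smul_mul_assoc, mul_smul_comm, hS, hT, hST]
  module

lemma cm {R A : Type*} [CommRing R] [Ring A] [Algebra R A] (S T : A) (a b : R)
    (hST : S * T = T * S) :
    (1 + a • S) * (1 + b • T) = (1 + b • T) * (1 + a • S) := by
  simp only [mul_add, add_mul, one_mul, mul_one, smul_mul_assoc, mul_smul_comm, hST]
  module

lemma adjSwap_other {a : Fin n} (h : (a:ℕ)+1 < n) (x : Fin n) (h1 : (x:ℕ) ≠ a)
    (h2 : (x:ℕ) ≠ a + 1) : adjSwap a h x = x := by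
  unfold adjSwap
  apply Equiv.swap_apply_of_ne_of_ne <;> simpa [Fin.ext_iff]

lemma adjSwap_mul (b : Fin n) (k : (b:ℕ)+1 < n) (f : Equiv.Perm (Fin n)) :
    f * adjSwap b k = Equiv.swap (f b) (f ⟨(b:ℕ)+1, k⟩) * f :=
  Equiv.mul_swap_eq_swap_mul _ _ _

lemma adjSwap_comm {a b : Fin n} (h : (a:ℕ)+1 < n) (k : (b:ℕ)+1 < n)
    (hab : (a:ℕ)+1 < b) : adjSwap a h * adjSwap b k = adjSwap b k * adjSwap a h := by
  have e3 : adjSwap a h b = b := adjSwap_other _ _ (by omega) (by omega)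
  have e4 : adjSwap a h ⟨(b:ℕ)+1, k⟩ = ⟨(b:ℕ)+1, k⟩ :=
    adjSwap_other _ _ (by simp; omega) (by simp; omega)
  rw [adjSwap_mul b, e3, e4]
  rfl

lemma adjSwap_braid {a b : Fin n} (h : (a:ℕ)+1 < n) (k : (b:ℕ)+1 < n)
    (hab : (a:ℕ)+1 = b) : adjSwap a h * adjSwap b k * adjSwap a h =
      adjSwap b k * adjSwap a h * adjSwap b k := by
  have e1 : adjSwap b k a = a := adjSwap_other _ _ (by omega) (by omega)
  have e4 : adjSwap a h ⟨(b:ℕ)+1, k⟩ = ⟨(b:ℕ)+1, k⟩ :=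
    adjSwap_other _ _ (by simp; omega) (by simp; omega)
  have hb : b = ⟨(a:ℕ)+1, h⟩ := Fin.ext hab.symm
  have e5 : adjSwap a h b = a := by
    rw [hb]; exact adjSwap_right h
  have e6 : adjSwap b k ⟨(a:ℕ)+1, h⟩ = ⟨(b:ℕ)+1, k⟩ := by
    rw [← hb]; exact adjSwap_left k
  rw [adjSwap_mul b k (adjSwap a h), adjSwap_mul a h (adjSwap b k), e1, e4, e5, e6,
    mul_adjSwap_adjSwap, mul_adjSwap_adjSwap]

lemma mul3 {A : Type*} [Ring A] {x a b c d e f : A} (h : a * b * c = d * e * f) :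
    x * a * b * c = x * d * e * f := by
  have := congrArg (x * ·) h
  simpa only [mul_assoc] using this

lemma mul2 {A : Type*} [Ring A] {x a b d e : A} (h : a * b = d * e) :
    x * a * b = x * d * e := by
  have := congrArg (x * ·) h
  simpa only [mul_assoc] using this

lemma unique_step (N : ℕ)
    (ih : ∀ M ≤ N, ∀ (v : Equiv.Perm (Fin n)) P P', Reach M v P → Reach M v P' → P = P')
    (u u' : Equiv.Perm (Fin n)) (P0 P0' : AA n) (a b : Fin n) (h : (a:ℕ)+1 < n)
    (k : (b:ℕ)+1 < n) (hab : (a:ℕ) ≤ b)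
    (hu : u a < u ⟨(a:ℕ)+1, h⟩) (hu' : u' b < u' ⟨(b:ℕ)+1, k⟩)
    (huu : u * adjSwap a h = u' * adjSwap b k) (hR : Reach N u P0) (hR' : Reach N u' P0') :
    P0 * fac u a h = P0' * fac u' b k := by
  have hN := reach_inv _ _ _ hR
  have hN' := reach_inv _ _ _ hR'
  rcases hab.eq_or_lt with hab | hab
  · have : a = b := Fin.ext hab
    subst this
    have : u = u' := mul_right_cancel huu
    subst this
    rw [ih N le_rfl _ _ _ hR hR']
  rcases (Nat.succ_le_of_lt hab).eq_or_lt with hab | hab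
  · -- braid case
    have hb : b = ⟨(a:ℕ)+1, h⟩ := Fin.ext hab.symm
    have hk : (a:ℕ)+2 < n := by omega
    have hu'2 : u' = u * adjSwap a h * adjSwap b k := by rw [huu, mul_adjSwap_adjSwap]
    set t := u * adjSwap b k * adjSwap a h with ht
    have hu1 : u = t * adjSwap a h * adjSwap b k := by
      rw [ht, mul_adjSwap_adjSwap, mul_adjSwap_adjSwap]
    have hu2 : u' = t * adjSwap b k * adjSwap a h := by
      rw [hu'2, ht]
      have := adjSwap_braid h k hab
      calc u * adjSwap a h * adjSwap b k
          = u * (adjSwap a h * adjSwap b k * adjSwap a h) * adjSwap a h := by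
            rw [← mul_assoc, ← mul_assoc, mul_adjSwap_adjSwap]
        _ = _ := by rw [this]; simp only [mul_assoc]
    clear_value t
    have ea : adjSwap b k a = a := adjSwap_other _ _ (by omega) (by omega)
    have eb : adjSwap b k ⟨(a:ℕ)+1, h⟩ = ⟨(a:ℕ)+2, hk⟩ := by
      subst hb; exact adjSwap_left k
    have ec : adjSwap b k ⟨(a:ℕ)+2, hk⟩ = ⟨(a:ℕ)+1, h⟩ := by
      subst hb; exact adjSwap_right k
    have fc : adjSwap a h ⟨(a:ℕ)+2, hk⟩ = ⟨(a:ℕ)+2, hk⟩ :=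
      adjSwap_other _ _ (by simp) (by simp)
    have hb2 : (⟨(b:ℕ)+1, k⟩ : Fin n) = ⟨(a:ℕ)+2, hk⟩ := by
      subst hb; rfl
    have hbe : adjSwap b k b = ⟨(a:ℕ)+2, hk⟩ := by rw [← hb2]; exact adjSwap_left k
    simp only [hb2] at hu'
    have v1 : u a = t ⟨(a:ℕ)+1, h⟩ := by
      rw [hu1]; simp only [Equiv.Perm.mul_apply, ea, adjSwap_left]
    have v2 : u ⟨(a:ℕ)+1, h⟩ = t ⟨(a:ℕ)+2, hk⟩ := by
      rw [hu1]; simp only [Equiv.Perm.mul_apply, eb, fc]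
    have v3 : u' b = t a := by
      have : adjSwap a h b = a := by rw [hb]; exact adjSwap_right h
      rw [hu2]; simp only [Equiv.Perm.mul_apply, this, ea]
    have v4 : u' ⟨(a:ℕ)+2, hk⟩ = t ⟨(a:ℕ)+1, h⟩ := by
      rw [hu2]; simp only [Equiv.Perm.mul_apply, fc, ec]
    rw [v1, v2] at hu
    rw [v3, v4] at hu'
    -- lengths
    have w1 : (t * adjSwap a h) b = t a := by
      rw [hb]; simp only [Equiv.Perm.mul_apply, adjSwap_right]
    have w2 : (t * adjSwap a h) ⟨(b:ℕ)+1, k⟩ = t ⟨(a:ℕ)+2, hk⟩ := by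
      rw [hb2]; simp only [Equiv.Perm.mul_apply, fc]
    have w3 : (t * adjSwap b k) a = t a := by
      simp only [Equiv.Perm.mul_apply, ea]
    have w4 : (t * adjSwap b k) ⟨(a:ℕ)+1, h⟩ = t ⟨(a:ℕ)+2, hk⟩ := by
      simp only [Equiv.Perm.mul_apply, eb]
    have a1 : t a < t ⟨(a:ℕ)+1, h⟩ := hu'
    have a2 : (t * adjSwap a h) b < (t * adjSwap a h) ⟨(b:ℕ)+1, k⟩ := by
      rw [w1, w2]; exact hu'.trans hu
    have a3 : t b < t ⟨(b:ℕ)+1, k⟩ := by rw [hb2, hb]; exact hu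
    have a4 : (t * adjSwap b k) a < (t * adjSwap b k) ⟨(a:ℕ)+1, h⟩ := by
      rw [w3, w4]; exact hu'.trans hu
    have l1 := invCount_asc t h a1
    have l2 := invCount_asc _ k a2
    rw [← hu1, hN] at l2
    obtain ⟨M, rfl⟩ : ∃ M, N = M + 2 := ⟨invCount t, by omega⟩
    obtain ⟨T, hT⟩ := reach_exists M t (by omega)
    have r1 : Reach (M+2) u (T * fac t a h * fac (t * adjSwap a h) b k) :=
      ⟨_, _, b, k, a2, hu1, ⟨_, _, a, h, a1, rfl, hT, rfl⟩, rfl⟩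
    have r2 : Reach (M+2) u' (T * fac t b k * fac (t * adjSwap b k) a h) :=
      ⟨_, _, a, h, a4, hu2, ⟨_, _, b, k, a3, rfl, hT, rfl⟩, rfl⟩
    rw [ih _ le_rfl _ _ _ hR r1, ih _ le_rfl _ _ _ hR' r2]
    apply mul3
    unfold fac
    rw [w1, w2, w3, w4, v1, v2, hb2, v3, v4]
    have hb3 : t b = t ⟨(a:ℕ)+1, h⟩ := by rw [hb]
    rw [hb3]
    apply yb
    · rw [← map_mul, adjSwap_sq, map_one]
    · rw [← map_mul, adjSwap_sq, map_one]
    · simp only [← map_mul]; rw [adjSwap_braid h k hab]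
    · ring
  · -- commuting case
    have hab : (a:ℕ)+1 < b := hab
    have hu'2 : u' = u * adjSwap a h * adjSwap b k := by rw [huu, mul_adjSwap_adjSwap]
    set t := u * adjSwap b k with ht
    have hu1 : u = t * adjSwap b k := by
      rw [ht, mul_adjSwap_adjSwap]
    have hu2 : u' = t * adjSwap a h := by
      rw [hu'2, ht, mul_assoc, adjSwap_comm h k hab, mul_assoc]
    clear_value t
    have e1 : adjSwap b k a = a := adjSwap_other _ _ (by omega) (by omega)
    have e2 : adjSwap b k ⟨(a:ℕ)+1, h⟩ = ⟨(a:ℕ)+1, h⟩ :=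
      adjSwap_other _ _ (by simp; omega) (by simp; omega)
    have e3 : adjSwap a h b = b := adjSwap_other _ _ (by omega) (by omega)
    have e4 : adjSwap a h ⟨(b:ℕ)+1, k⟩ = ⟨(b:ℕ)+1, k⟩ :=
      adjSwap_other _ _ (by simp; omega) (by simp; omega)
    have v1 : u a = t a := by rw [hu1]; simp only [Equiv.Perm.mul_apply, e1]
    have v2 : u ⟨(a:ℕ)+1, h⟩ = t ⟨(a:ℕ)+1, h⟩ := by
      rw [hu1]; simp only [Equiv.Perm.mul_apply, e2]
    have v3 : u' b = t b := by rw [hu2]; simp only [Equiv.Perm.mul_apply, e3]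
    have v4 : u' ⟨(b:ℕ)+1, k⟩ = t ⟨(b:ℕ)+1, k⟩ := by
      rw [hu2]; simp only [Equiv.Perm.mul_apply, e4]
    rw [v1, v2] at hu
    rw [v3, v4] at hu'
    have l1 := invCount_asc t k hu'
    rw [← hu1, hN] at l1
    obtain ⟨M, rfl⟩ : ∃ M, N = M + 1 := ⟨invCount t, by omega⟩
    obtain ⟨T, hT⟩ := reach_exists M t (by omega)
    have r1 : Reach (M+1) u (T * fac t b k) := ⟨_, _, b, k, hu', hu1, hT, rfl⟩
    have r2 : Reach (M+1) u' (T * fac t a h) := ⟨_, _, a, h, hu, hu2, hT, rfl⟩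
    rw [ih _ le_rfl _ _ _ hR r1, ih _ le_rfl _ _ _ hR' r2]
    apply mul2
    unfold fac
    rw [v1, v2, v3, v4]
    apply cm
    rw [← map_mul, ← map_mul, adjSwap_comm h k hab]

lemma reach_unique (N : ℕ) :
    ∀ (v : Equiv.Perm (Fin n)) P P', Reach N v P → Reach N v P' → P = P' := by
  induction N using Nat.strong_induction_on with
  | _ N ih =>
  rcases N with _ | N
  · rintro v P P' ⟨_, rfl⟩ ⟨_, rfl⟩; rfl
  · rintro v P P' ⟨u, P0, a, h, hu, rfl, hR, rfl⟩ ⟨u', P0', b, k, hu', huu, hR', rfl⟩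
    have ih' : ∀ M ≤ N, ∀ (v : Equiv.Perm (Fin n)) P P', Reach M v P → Reach M v P' → P = P' :=
      fun M hM => ih M (by omega)
    rcases le_total (a:ℕ) b with hab | hab
    · exact unique_step N ih' u u' P0 P0' a b h k hab hu hu' huu hR hR'
    · exact (unique_step N ih' u' u P0' P0 b a k h hab hu' hu huu.symm hR' hR).symm

lemma partialProd_succ (q : Fin m → Fin n) (hq : ∀ i, (q i : ℕ) + 1 < n) (k : ℕ) (hk : k < m) :
    partialProd q hq (k+1) = partialProd q hq k * adjSwap (q ⟨k, hk⟩) (hq _) := by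
  unfold partialProd
  rw [List.take_add_one, List.prod_append]
  simp [hk, wordPerm]

def facs (q : Fin m → Fin n) (hq : ∀ i, (q i : ℕ) + 1 < n) (i : Fin m) : AA n :=
  1 + MonoidAlgebra.single (wordPerm q hq i) (beta ℤ q hq i)

lemma reach_word (q : Fin m → Fin n) (hq : ∀ i, (q i : ℕ) + 1 < n)
    (hred : m = invCount (wordProd q hq)) :
    Reach m (wordProd q hq) (List.ofFn (facs q hq)).prod := by
  have hfull : partialProd q hq m = wordProd q hq := by
    unfold partialProd wordProd
    rw [List.take_of_length_le (by simp)]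
  have hle : ∀ k (hk : k < m), invCount (partialProd q hq (k+1)) ≤
      invCount (partialProd q hq k) + 1 := by
    intro k hk
    rw [partialProd_succ q hq k hk]
    rcases asc_or_desc (partialProd q hq k) (hq ⟨k, hk⟩) with h | h
    · rw [invCount_asc _ _ h]
    · have := invCount_desc _ _ h
      omega
  have hz : partialProd q hq 0 = 1 := by simp [partialProd]
  have hup : ∀ k ≤ m, invCount (partialProd q hq k) ≤ k := by
    intro k
    induction k with
    | zero => intro _; rw [hz, invCount_one]
    | succ k ih => intro hk; have := hle k hk; have := ih (by omega); omega
  have hdown : ∀ j ≤ m, m ≤ invCount (partialProd q hq (m - j)) + j := by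
    intro j
    induction j with
    | zero => intro _; rw [Nat.sub_zero, hfull]; omega
    | succ j ih =>
      intro hj
      have h1 := ih (by omega)
      have h2 := hle (m - (j+1)) (by omega)
      rw [show m - (j+1) + 1 = m - j by omega] at h2
      omega
  have heq : ∀ k ≤ m, invCount (partialProd q hq k) = k := by
    intro k hk
    have h1 := hup k hk
    have h2 := hdown (m - k) (by omega)
    rw [show m - (m - k) = k by omega] at h2
    omega
  have key : ∀ k ≤ m, Reach k (partialProd q hq k) ((List.ofFn (facs q hq)).take k).prod := by
    intro k
    induction k with
    | zero => intro _; exact ⟨hz, by simp⟩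
    | succ k ih =>
      intro hk
      have hk' : k < m := hk
      refine ⟨_, _, q ⟨k, hk'⟩, hq _, ?_, partialProd_succ q hq k hk', ih (by omega), ?_⟩
      · rcases asc_or_desc (partialProd q hq k) (hq ⟨k, hk'⟩) with h | h
        · exact h
        · have h1 := invCount_desc _ _ h
          rw [← partialProd_succ q hq k hk', heq _ hk, heq _ hk'.le] at h1
          omega
      · rw [List.take_add_one, List.prod_append]
        simp [hk', facs, fac, wordPerm, beta]
  have := key m le_rfl
  rwa [hfull, List.take_of_length_le (by simp)] at this

lemma prod_expand {ι A : Type*} [DecidableEq ι] [Ring A] (x : ι → A) (L : List ι) (hL : L.Nodup) :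
    (L.map (fun i => 1 + x i)).prod =
      ∑ I ∈ L.toFinset.powerset, ((L.filter (fun i => decide (i ∈ I))).map x).prod := by
  induction L with
  | nil => simp
  | cons a L ih =>
    rw [List.nodup_cons] at hL
    have ha : a ∉ L.toFinset := by simpa using hL.1
    rw [List.toFinset_cons, Finset.sum_powerset_insert ha, List.map_cons, List.prod_cons,
      ih hL.2, add_mul, one_mul, Finset.mul_sum]
    congr 1
    · apply Finset.sum_congr rfl
      intro I hI
      have : a ∉ I := fun h => ha (Finset.mem_powerset.1 hI h)
      rw [List.filter_cons_of_neg (by simpa using this)]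
    · apply Finset.sum_congr rfl
      intro I hI
      rw [List.filter_cons_of_pos (by simp), List.map_cons, List.prod_cons]
      congr 3
      apply List.filter_congr
      intro i hi
      have : i ≠ a := by rintro rfl; exact hL.1 hi
      simp [this]

lemma csm_eq (q : Fin m → Fin n) (hq : ∀ i, (q i : ℕ) + 1 < n) (w : Equiv.Perm (Fin n)) :
    csmSum q hq w = (List.ofFn (facs q hq)).prod.coeff w := by
  have hs : ∀ L : List (Fin m),
      (L.map (fun i => (MonoidAlgebra.single (wordPerm q hq i) (beta ℤ q hq i) : AA n))).prod =
      MonoidAlgebra.single (L.map (wordPerm q hq)).prod (L.map (beta ℤ q hq)).prod := by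
    intro L
    induction L with
    | nil => rfl
    | cons a L ih => simp [ih, MonoidAlgebra.single_mul_single]
  have hb : ∀ I : Finset (Fin m),
      (((List.finRange m).filter (fun i => decide (i ∈ I))).map (beta ℤ q hq)).prod =
        ∏ i ∈ I, beta ℤ q hq i := by
    intro I
    rw [← List.prod_toFinset _ ((List.nodup_finRange m).filter _)]
    congr 1
    ext i
    simp
  rw [List.ofFn_eq_map]
  unfold facs
  rw [prod_expand _ _ (List.nodup_finRange m)]
  simp only [hs, hb]
  rw [List.toFinset_finRange, Finset.powerset_univ]
  unfold csmSum
  rw [Finset.sum_filter, MonoidAlgebra.coeff_sum, Finsupp.finset_sum_apply]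
  apply Finset.sum_congr rfl
  intro I _
  rw [MonoidAlgebra.coeff_single_apply]
  rfl

theorem statement17 {n : ℕ} (hn : 1 ≤ n) (v : Equiv.Perm (Fin n)) {l : ℕ}
    (q : Fin l → Fin n) (hq : ∀ i, (q i : ℕ) + 1 < n)
    (q' : Fin l → Fin n) (hq' : ∀ i, (q' i : ℕ) + 1 < n)
    (hv : wordProd q hq = v) (hv' : wordProd q' hq' = v)
    (hred : l = invCount v)
    (w : Equiv.Perm (Fin n)) :
    csmSum q hq w = csmSum q' hq' w := by
  rw [csm_eq, csm_eq]
  subst hv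
  have h1 := reach_word q hq hred
  have h2 := reach_word q' hq' (by rw [hv']; exact hred)
  rw [hv'] at h2
  rw [reach_unique _ _ _ _ h1 h2]


end AJSBilleySSM
end
end
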